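/- For every real z > 0 and every real x with 0 < x < r(z), the infinite product Π_{n≥1, m≥1} (1 − x^n z^m)^{a_{n,m}} converges to a nonzero limit and T(x,z) − zx + x = x / Π_{n≥1, m≥1} (1 − x^n z^m)^{a_{n,m}} (the bivariate analogue of the Cayley product formula). -/

import Mathlib

open SimpleGraph

/-- A rooted tree on vertex set `Fin n`: a connected acyclic simple graph
with a distinguished root vertex. -/
structure RTree (n : ℕ) where
  adj : SimpleGraph (Fin n)
  connected : adj.Connected
  acyclic : adj.IsAcyclic
  root : Fin n

/-- `v` is a leaf of the rooted tree `t`: a vertex of degree one other than the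
root, except that in the one-vertex tree the root counts as a leaf. -/
def IsLeafV {n : ℕ} (t : RTree n) (v : Fin n) : Prop :=
  n = 1 ∨ ((t.adj.neighborSet v).ncard = 1 ∧ v ≠ t.root)

/-- The number of leaves of a rooted tree. -/
noncomputable def numLeaves {n : ℕ} (t : RTree n) : ℕ :=
  Nat.card {v : Fin n // IsLeafV t v}

/-- Root-preserving isomorphism of rooted trees. -/
def treeSetoid (n : ℕ) : Setoid (RTree n) where
  r t t' := ∃ e : t.adj ≃g t'.adj, e t.root = t'.root
  iseqv := by
    constructor
    · intro t; exact ⟨RelIso.refl _, rfl⟩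
    · rintro t t' ⟨e, he⟩
      exact ⟨e.symm, by rw [← he]; exact e.symm_apply_apply t.root⟩
    · rintro a b c ⟨e, he⟩ ⟨f, hf⟩
      exact ⟨e.trans f, by simp [RelIso.trans_apply, he, hf]⟩

/-- `aCount n k` : the number of isomorphism classes of rooted trees with `n`
vertices and exactly `k` leaves. -/
noncomputable def aCount (n k : ℕ) : ℕ :=
  Nat.card (Quotient (Setoid.comap
    (Subtype.val : {t : RTree n // numLeaves t = k} → RTree n)
    (treeSetoid n)))

/-- The real bivariate generating function `T(x,z) = Σ_{n,k} a_{n,k} x^n z^k`. -/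
noncomputable def Treal (x z : ℝ) : ℝ :=
  ∑' p : ℕ × ℕ, (aCount p.1 p.2 : ℝ) * x ^ p.1 * z ^ p.2

/-- `r(ζ)`, the radius of convergence in `x` of `T(x,ζ)` for `ζ > 0`. -/
noncomputable def rFun (ζ : ℝ) : ℝ :=
  sSup {x : ℝ | 0 < x ∧
    Summable (fun p : ℕ × ℕ => (aCount p.1 p.2 : ℝ) * x ^ p.1 * ζ ^ p.2)}

inductive Desc {V : Type} (p : V → V) (c : V) : V → Prop
  | self : Desc p c c
  | step (v : V) : Desc p c (p v) → Desc p c v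

theorem Desc.inv {V : Type} {p : V → V} {c v : V} (h : Desc p c v) : v = c ∨ Desc p c (p v) := by
  cases h with
  | self => exact Or.inl rfl
  | step _ h => exact Or.inr h

/-- Rooted trees given by a parent function. -/
structure PF where
  V : Type
  fin : Finite V
  p : V → V
  r : V
  hr : p r = r
  hp : ∀ v, Desc p r v

namespace PF

instance (A : PF) : Finite A.V := A.fin

theorem desc_fix {V : Type} {p : V → V} {c r : V} (hr : p r = r) (h : Desc p c r) : r = c := by
  generalize hv : r = v at h
  induction h with
  | self => rfl
  | step v h ih => subst hv; rw [hr] at ih; exact ih rfl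

theorem fix_eq (A : PF) {v : A.V} (h : A.p v = v) : v = A.r := desc_fix h (A.hp v)

/-- no 2-cycles -/
theorem no_two (A : PF) {v : A.V} (h : A.p (A.p v) = v) : v = A.r := by
  have key : ∀ u, Desc A.p A.r u → A.p (A.p u) = u → u = A.r := by
    intro u hu
    induction hu with
    | self => intro _; rfl
    | step u hu ih =>
      intro h2
      have := ih (by rw [h2])
      rw [this, A.hr] at h2
      exact h2.symm
  exact key v (A.hp v) h

def Iso (A B : PF) : Prop := ∃ e : A.V ≃ B.V, ∀ v, e (A.p v) = B.p (e v)

theorem Iso.refl (A : PF) : Iso A A := ⟨Equiv.refl _, fun _ => rfl⟩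
theorem Iso.symm {A B : PF} : Iso A B → Iso B A := by
  rintro ⟨e, he⟩
  refine ⟨e.symm, fun v => ?_⟩
  rw [Equiv.symm_apply_eq, he, Equiv.apply_symm_apply]
theorem Iso.trans {A B C : PF} : Iso A B → Iso B C → Iso A C := by
  rintro ⟨e, he⟩ ⟨f, hf⟩
  exact ⟨e.trans f, fun v => by simp [he, hf]⟩

theorem iso_root {A B : PF} (e : A.V ≃ B.V) (he : ∀ v, e (A.p v) = B.p (e v)) : e A.r = B.r :=
  B.fix_eq (by rw [← he, A.hr])

instance setoid : Setoid PF := ⟨Iso, Iso.refl, Iso.symm, Iso.trans⟩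

def Leaf (A : PF) (v : A.V) : Prop := ∀ u, A.p u = v → u = v

noncomputable def size (A : PF) : ℕ := Nat.card A.V
noncomputable def leaves (A : PF) : ℕ := Nat.card {v // A.Leaf v}

theorem size_congr {A B : PF} (h : Iso A B) : A.size = B.size := by
  obtain ⟨e, _⟩ := h
  exact Nat.card_congr e

theorem leaves_congr {A B : PF} (h : Iso A B) : A.leaves = B.leaves := by
  obtain ⟨e, he⟩ := h
  refine Nat.card_congr (Equiv.subtypeEquiv e fun v => ?_)
  constructor
  · intro hv u hu
    have := hv (e.symm u) (e.injective (by rw [he]; simpa using hu))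
    rw [← this]; simp
  · intro hv u hu
    exact e.injective (hv (e u) (by rw [← he, hu]))

open Classical in
/-- subtree of descendants of `c` -/
noncomputable def sub (A : PF) (c : A.V) : PF where
  V := {v : A.V // Desc A.p c v}
  fin := inferInstance
  p v := if h : v.1 = c then v else ⟨A.p v.1, v.2.inv.resolve_left h⟩
  r := ⟨c, Desc.self⟩
  hr := by simp
  hp := by
    rintro ⟨v, hv⟩
    induction hv with
    | self => exact Desc.self
    | step v h ih =>
      by_cases hvc : v = c
      · subst hvc; exact Desc.self
      · refine Desc.step _ ?_
        simp only [hvc, dif_neg, not_false_eq_true]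
        exact ih

def Ch (A : PF) : Type := {c : A.V // A.p c = A.r ∧ c ≠ A.r}
instance (A : PF) : Finite A.Ch := inferInstanceAs (Finite {c : A.V // A.p c = A.r ∧ c ≠ A.r})

open Classical in
noncomputable def join {ι : Type} [Finite ι] (f : ι → PF) : PF where
  V := Option (Σ i, (f i).V)
  fin := inferInstance
  p w := match w with
    | none => none
    | some ⟨i, v⟩ => if v = (f i).r then none else some ⟨i, (f i).p v⟩
  r := none
  hr := rfl
  hp := by
    rintro (_ | ⟨i, v⟩)
    · exact Desc.self
    · have := (f i).hp v
      induction this with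
      | self => exact Desc.step _ (by simp only [if_true]; exact Desc.self)
      | step v h ih =>
        refine Desc.step _ ?_
        by_cases hv : v = (f i).r
        · simp only [hv, if_true]; exact Desc.self
        · simp only [hv, if_false]; exact ih

theorem join_p_root {ι : Type} [Finite ι] (f : ι → PF) (i : ι) :
    (join f).p (some ⟨i, (f i).r⟩) = none := by simp [join]
theorem join_p_none {ι : Type} [Finite ι] (f : ι → PF) :
    (join f).p none = none := rfl
theorem join_p_some {ι : Type} [Finite ι] (f : ι → PF) (i : ι) (v) (hv : v ≠ (f i).r) :
    (join f).p (some ⟨i, v⟩) = some ⟨i, (f i).p v⟩ := by simp [join, hv]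

theorem join_congr {ι κ : Type} [Finite ι] [Finite κ] (f : ι → PF) (g : κ → PF) (σ : ι ≃ κ)
    (h : ∀ i, Iso (f i) (g (σ i))) : Iso (join f) (join g) := by
  choose e he using h
  refine ⟨Equiv.optionCongr (Equiv.sigmaCongr σ e), ?_⟩
  rintro (_ | ⟨i, v⟩)
  · rfl
  · by_cases hv : v = (f i).r
    · subst hv
      erw [join_p_root]
      have := iso_root (e i) (he i)
      change none = (join g).p (some ⟨σ i, e i (f i).r⟩)
      rw [this, join_p_root]
    · erw [join_p_some f i v hv]
      change some (⟨σ i, e i ((f i).p v)⟩ : Σ j, (g j).V) = (join g).p (some ⟨σ i, e i v⟩)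
      rw [join_p_some, he]
      intro h'
      rw [← iso_root (e i) (he i)] at h'
      exact hv ((e i).injective h')

theorem not_desc_root (A : PF) (c : A.Ch) : ¬ Desc A.p c.1 A.r := fun h =>
  c.2.2 (desc_fix A.hr h).symm

theorem ch_unique (A : PF) (c c' : A.Ch) (v : A.V) (h : Desc A.p c.1 v) (h' : Desc A.p c'.1 v) :
    c = c' := by
  induction h with
  | self =>
    rcases h'.inv with h1 | h1
    · exact Subtype.ext h1
    · rw [c.2.1] at h1; exact (A.not_desc_root _ h1).elim
  | step v hv ih =>
    rcases h'.inv with h1 | h1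
    · rw [h1, c'.2.1] at hv; exact (A.not_desc_root _ hv).elim
    · exact ih h1

theorem ch_exists (A : PF) (v : A.V) (hv : v ≠ A.r) : ∃ c : A.Ch, Desc A.p c.1 v := by
  have := A.hp v
  induction this with
  | self => exact absurd rfl hv
  | step v h ih =>
    by_cases h1 : A.p v = A.r
    · exact ⟨⟨v, h1, hv⟩, Desc.self⟩
    · obtain ⟨c, hc⟩ := ih h1
      exact ⟨c, Desc.step _ hc⟩

theorem sub_p_root (A : PF) (c : A.V) (v : (A.sub c).V) (h : v.1 = c) : (A.sub c).p v = v := dif_pos h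
theorem sub_p (A : PF) (c : A.V) (v : (A.sub c).V) (h : v.1 ≠ c) :
    ((A.sub c).p v).1 = A.p v.1 :=
  congrArg Subtype.val (dif_neg h)

theorem iso_join (A : PF) : Iso (join fun c : A.Ch => A.sub c.1) A := by
  let φ : (join fun c : A.Ch => A.sub c.1).V → A.V := fun w => match w with
    | none => A.r
    | some ⟨_, v⟩ => v.1
  have hφ : Function.Bijective φ := by
    constructor
    · rintro (_ | ⟨c, v, hv⟩) (_ | ⟨c', v', hv'⟩) h
      · rfl
      · change A.r = v' at h
        subst h; exact (A.not_desc_root _ hv').elim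
      · change v = A.r at h
        subst h; exact (A.not_desc_root _ hv).elim
      · change v = v' at h
        subst h
        obtain rfl := A.ch_unique c c' v hv hv'
        rfl
    · intro v
      by_cases hv : v = A.r
      · exact ⟨none, hv.symm⟩
      · obtain ⟨c, hc⟩ := A.ch_exists v hv
        exact ⟨some ⟨c, v, hc⟩, rfl⟩
  refine ⟨Equiv.ofBijective φ hφ, ?_⟩
  change ∀ v, φ _ = A.p (φ v)
  rintro (_ | ⟨c, v⟩)
  · exact A.hr.symm
  · by_cases h : v = (A.sub c.1).r
    · subst h
      erw [join_p_root]
      exact c.2.1.symm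
    · refine (congrArg φ (join_p_some (fun c : A.Ch => A.sub c.1) c v h)).trans ?_
      exact A.sub_p c.1 v (fun h' => h (Subtype.ext h'))

theorem sub_congr {A B : PF} (e : A.V ≃ B.V) (he : ∀ v, e (A.p v) = B.p (e v)) (c : A.V) :
    Iso (A.sub c) (B.sub (e c)) := by
  have key : ∀ v, Desc A.p c v ↔ Desc B.p (e c) (e v) := by
    intro v
    constructor
    · intro h
      induction h with
      | self => exact Desc.self
      | step v h ih => exact Desc.step _ (by rw [← he]; exact ih)
    · intro h
      generalize hw : e v = w at h
      induction h generalizing v with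
      | self => rw [e.injective hw]; exact Desc.self
      | step w h ih => exact Desc.step _ (ih _ (by rw [he, hw]))
  refine ⟨Equiv.subtypeEquiv e key, ?_⟩
  rintro ⟨v, hv⟩
  by_cases h : v = c
  · subst h
    exact (congrArg (Equiv.subtypeEquiv e key) (sub_p_root A v ⟨v, hv⟩ rfl)).trans
      (sub_p_root B (e v) _ rfl).symm
  · apply Subtype.ext
    have h1 : e ((A.sub c).p ⟨v, hv⟩).1 = B.p (e v) :=
      (congrArg e (sub_p A c ⟨v, hv⟩ h)).trans (he v)
    exact h1.trans (sub_p B (e c) ⟨e v, (key v).1 hv⟩ (fun h' => h (e.injective h'))).symm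

end PF

open Classical in
noncomputable def msf {ι : Type} [Finite ι] {α : Type 1} (f : ι → α) : Multiset α :=
  letI := Fintype.ofFinite ι
  Finset.univ.val.map f

theorem msf_eq_of {ι κ : Type} [Finite ι] [Finite κ] {α : Type 1} (f : ι → α) (g : κ → α)
    (σ : ι ≃ κ) (h : ∀ i, f i = g (σ i)) : msf f = msf g := by
  unfold msf
  let _ := Fintype.ofFinite ι
  let _ := Fintype.ofFinite κ
  have : f = g ∘ σ := funext h
  rw [this, ← Multiset.map_map, Multiset.map_univ_val_equiv]

theorem msf_eq {ι κ : Type} [Finite ι] [Finite κ] {α : Type 1} (f : ι → α) (g : κ → α)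
    (h : msf f = msf g) : ∃ σ : ι ≃ κ, ∀ i, f i = g (σ i) := by
  classical
  unfold msf at h
  let _ := Fintype.ofFinite ι
  let _ := Fintype.ofFinite κ
  have : ∀ a, Nonempty ({i // f i = a} ≃ {i // g i = a}) := by
    intro a
    have h1 := congrArg (Multiset.count a) h
    rw [Multiset.count_map, Multiset.count_map] at h1
    refine ⟨Fintype.equivOfCardEq ?_⟩
    rw [Fintype.card_subtype, Fintype.card_subtype]
    simpa [Finset.card_def, eq_comm] using h1
  have e := fun a => (this a).some
  refine ⟨(Equiv.sigmaFiberEquiv f).symm.trans ((Equiv.sigmaCongrRight e).trans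
    (Equiv.sigmaFiberEquiv g)), fun i => ?_⟩
  exact ((e (f i)) ⟨i, rfl⟩).2.symm

theorem msf_surj {α : Type 1} (m : Multiset α) : ∃ (n : ℕ) (f : Fin n → α), m = msf f := by
  induction m using Quotient.inductionOn with
  | h l =>
    refine ⟨l.length, l.get, ?_⟩
    unfold msf
    rw [Subsingleton.elim (Fintype.ofFinite (Fin l.length)) (Fin.fintype _)]
    simp

abbrev TT : Type 1 := Quotient PF.setoid

noncomputable def TT.size : TT → ℕ := Quotient.lift PF.size fun _ _ h => PF.size_congr h
noncomputable def TT.leaves : TT → ℕ := Quotient.lift PF.leaves fun _ _ h => PF.leaves_congr h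

noncomputable def PF.D (A : PF) : Multiset TT := msf fun c : A.Ch => (⟦A.sub c.1⟧ : TT)

theorem PF.D_congr {A B : PF} (h : PF.Iso A B) : A.D = B.D := by
  obtain ⟨e, he⟩ := h
  refine msf_eq_of _ _ (Equiv.subtypeEquiv e fun c => ?_) ?_
  · rw [← PF.iso_root e he, ← he, e.injective.eq_iff, Ne, Ne, e.injective.eq_iff]
  · intro c
    exact Quotient.sound (PF.sub_congr e he c.1)

noncomputable def TT.D : TT → Multiset TT := Quotient.lift PF.D fun _ _ h => PF.D_congr h

theorem PF.D_join {ι : Type} [Finite ι] (f : ι → PF) :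
    (PF.join f).D = msf fun i => (⟦f i⟧ : TT) := by
  symm
  let φ : ι → (join f).Ch := fun i => ⟨some ⟨i, (f i).r⟩, by rw [join_p_root]; rfl, by
    change some _ ≠ none; simp⟩
  have hφ : Function.Bijective φ := by
    constructor
    · intro i j h
      have h1 := congrArg Subtype.val h
      have h2 := Option.some.inj h1
      exact congrArg Sigma.fst h2
    · rintro ⟨_ | ⟨i, v⟩, h1, h2⟩
      · exact (h2 rfl).elim
      · by_cases hv : v = (f i).r
        · subst hv; exact ⟨i, rfl⟩
        · rw [join_p_some _ _ _ hv] at h1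
          exact (Option.some_ne_none _ h1).elim
  refine msf_eq_of _ _ (Equiv.ofBijective φ hφ) ?_
  intro i
  apply Quotient.sound
  change Iso (f i) ((join f).sub (some ⟨i, (f i).r⟩))
  have hdesc : ∀ v, Desc (join f).p (some ⟨i, (f i).r⟩) (some ⟨i, v⟩) := by
    intro v
    have := (f i).hp v
    induction this with
    | self => exact Desc.self
    | step v h ih =>
      by_cases hv : v = (f i).r
      · subst hv; exact Desc.self
      · refine Desc.step _ ?_
        rw [join_p_some _ _ _ hv]; exact ih
  let ψ : (f i).V → ((join f).sub (some ⟨i, (f i).r⟩)).V := fun v => ⟨some ⟨i, v⟩, hdesc v⟩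
  have hψ : Function.Bijective ψ := by
    constructor
    · intro v w h
      have h1 := congrArg Subtype.val h
      have h2 := Option.some.inj h1
      simpa using h2
    · rintro ⟨w, hw⟩
      have : ∃ v, w = some ⟨i, v⟩ := by
        induction hw with
        | self => exact ⟨_, rfl⟩
        | step w h ih =>
          obtain ⟨v, hv⟩ := ih
          rcases w with _ | ⟨j, u⟩
          · exact (Option.some_ne_none _ hv.symm).elim
          · by_cases hu : u = (f j).r
            · subst hu; rw [join_p_root] at hv
              exact (Option.some_ne_none _ hv.symm).elim
            · rw [join_p_some _ _ _ hu] at hv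
              have h2 := congrArg Sigma.fst (Option.some.inj hv)
              change j = i at h2
              subst h2
              exact ⟨u, rfl⟩
      obtain ⟨v, rfl⟩ := this
      exact ⟨v, rfl⟩
  refine ⟨Equiv.ofBijective ψ hψ, ?_⟩
  change ∀ v, ψ _ = PF.p _ (ψ v)
  intro v
  by_cases hv : v = (f i).r
  · subst hv
    exact (congrArg ψ (f i).hr).trans (sub_p_root (join f) _ _ rfl).symm
  · apply Subtype.ext
    refine (join_p_some _ _ _ hv).symm.trans (sub_p (join f) _ (ψ v) ?_).symm
    · intro h
      have h2 := Option.some.inj h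
      apply hv
      simpa using h2

theorem TT.D_inj : Function.Injective TT.D := by
  intro s t
  induction s using Quotient.inductionOn with
  | h A =>
  induction t using Quotient.inductionOn with
  | h B =>
  intro h
  obtain ⟨σ, hσ⟩ := msf_eq _ _ h
  apply Quotient.sound
  refine (A.iso_join.symm.trans (PF.join_congr _ _ σ fun i => ?_)).trans B.iso_join
  exact Quotient.exact (hσ i)

theorem TT.D_surj : Function.Surjective TT.D := by
  intro m
  obtain ⟨n, f, rfl⟩ := msf_surj m
  refine ⟨⟦PF.join fun i => (f i).out⟧, ?_⟩
  change PF.D _ = _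
  rw [PF.D_join]
  simp

noncomputable def TT.DE : TT ≃ Multiset TT := Equiv.ofBijective TT.D ⟨TT.D_inj, TT.D_surj⟩

theorem PF.size_join {ι : Type} [Fintype ι] (f : ι → PF) :
    (join f).size = 1 + ∑ i, (f i).size := by
  unfold PF.size
  change Nat.card (Option (Σ i, (f i).V)) = _
  rw [Finite.card_option, Nat.card_sigma, add_comm]

theorem PF.leaf_join {ι : Type} [Finite ι] (f : ι → PF) (i : ι) (v : (f i).V) :
    (join f).Leaf (some ⟨i, v⟩) ↔ (f i).Leaf v := by
  constructor
  · intro h u hu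
    by_cases hr : u = (f i).r
    · subst hr; rw [← hu, (f i).hr]
    · have := h (some ⟨i, u⟩) (by rw [join_p_some _ _ _ hr, hu])
      have h2 := Option.some.inj this
      simpa using h2
  · rintro h (_ | ⟨j, u⟩) hu
    · exact (Option.some_ne_none _ hu.symm).elim
    · by_cases hr : u = (f j).r
      · subst hr; rw [join_p_root] at hu
        exact (Option.some_ne_none _ hu.symm).elim
      · rw [join_p_some _ _ _ hr] at hu
        have h3 := Option.some.inj hu
        have h2 := congrArg Sigma.fst h3
        change j = i at h2
        subst h2
        have h4 : (f j).p u = v := by simpa using h3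
        rw [h u h4]

theorem PF.leaves_join {ι : Type} [Fintype ι] [Nonempty ι] (f : ι → PF) :
    (join f).leaves = ∑ i, (f i).leaves := by
  unfold PF.leaves
  rw [← Nat.card_sigma]
  symm
  let φ : (Σ i, {v // (f i).Leaf v}) → {w // (join f).Leaf w} := fun w =>
    ⟨some ⟨w.1, w.2.1⟩, (leaf_join f _ _).2 w.2.2⟩
  refine Nat.card_congr (Equiv.ofBijective φ ⟨?_, ?_⟩)
  · rintro ⟨i, v, hv⟩ ⟨j, w, hw⟩ h
    have h3 := Option.some.inj (congrArg Subtype.val h)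
    have h2 := congrArg Sigma.fst h3
    change i = j at h2
    subst h2
    have h4 : v = w := by simpa using h3
    subst h4
    rfl
  · rintro ⟨_ | ⟨i, v⟩, h⟩
    · obtain ⟨i⟩ := ‹Nonempty ι›
      have := h (some ⟨i, (f i).r⟩) (join_p_root f i)
      exact (Option.some_ne_none _ this).elim
    · exact ⟨⟨i, v, (leaf_join f i v).1 h⟩, rfl⟩

theorem PF.leaves_join_empty {ι : Type} [Finite ι] [IsEmpty ι] (f : ι → PF) :
    (join f).leaves = 1 := by
  unfold PF.leaves
  rw [Nat.card_eq_one_iff_unique]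
  have : Subsingleton (join f).V := inferInstanceAs (Subsingleton (Option (Σ i, (f i).V)))
  exact ⟨inferInstance, ⟨⟨none, fun u _ => Subsingleton.elim _ _⟩⟩⟩

theorem TT.exists_join (t : TT) : ∃ (n : ℕ) (f : Fin n → PF), t = ⟦PF.join f⟧ := by
  obtain ⟨n, f, hf⟩ := msf_surj t.D
  refine ⟨n, fun i => (f i).out, ?_⟩
  apply TT.D_inj
  rw [hf]
  change _ = PF.D _
  rw [PF.D_join]
  simp

theorem msf_sum {n : ℕ} {α : Type 1} (f : Fin n → α) (g : α → ℕ) :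
    ((msf f).map g).sum = ∑ i, g (f i) := by
  unfold msf
  rw [Subsingleton.elim (Fintype.ofFinite (Fin n)) (Fin.fintype _)]
  simp only [Multiset.map_map]; rfl

theorem TT.size_eq (t : TT) : t.size = 1 + (t.D.map TT.size).sum := by
  obtain ⟨n, f, rfl⟩ := t.exists_join
  change PF.size _ = 1 + ((PF.D _).map _).sum
  rw [PF.D_join, msf_sum, PF.size_join]
  rfl

theorem TT.leaves_eq (t : TT) (h : t.D ≠ 0) : t.leaves = (t.D.map TT.leaves).sum := by
  obtain ⟨n, f, rfl⟩ := t.exists_join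
  change PF.D _ ≠ 0 at h
  change PF.leaves _ = ((PF.D _).map _).sum
  rw [PF.D_join] at h ⊢
  rcases n with _ | n
  · exact (h (by rw [← Multiset.card_eq_zero]; simp [msf])).elim
  · rw [msf_sum, PF.leaves_join]
    rfl

theorem TT.leaves_eq_zero (t : TT) (h : t.D = 0) : t.leaves = 1 := by
  obtain ⟨n, f, rfl⟩ := t.exists_join
  change PF.D _ = 0 at h
  change PF.leaves _ = 1
  rw [PF.D_join] at h
  have : n = 0 := by
    have := congrArg Multiset.card h
    simpa only [msf, Multiset.card_map, Finset.card_val, Finset.card_univ, Fintype.card_fin,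
      Multiset.card_zero, Fintype.card_eq_nat_card, Nat.card_fin] using this
  subst this
  exact PF.leaves_join_empty f

theorem TT.size_pos (t : TT) : 0 < t.size := by rw [t.size_eq]; omega

/-- since sizes decrease, every tree has a leaf -/
theorem TT.leaves_pos (t : TT) : 0 < t.leaves := by
  generalize hn : t.size = n
  induction n using Nat.strong_induction_on generalizing t with
  | _ n ih =>
    by_cases h : t.D = 0
    · rw [t.leaves_eq_zero h]; exact one_pos
    · rw [t.leaves_eq h]
      obtain ⟨s, hs⟩ := Multiset.exists_mem_of_ne_zero h
      have h1 : s.leaves ≤ (t.D.map TT.leaves).sum :=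
        Multiset.single_le_sum (fun _ _ => Nat.zero_le _) _ (Multiset.mem_map_of_mem _ hs)
      have h2 : s.size ≤ (t.D.map TT.size).sum :=
        Multiset.single_le_sum (fun _ _ => Nat.zero_le _) _ (Multiset.mem_map_of_mem _ hs)
      have h3 := t.size_eq
      exact lt_of_lt_of_le (ih s.size (by omega) s rfl) h1

theorem RTree.exists_parent {n : ℕ} (t : RTree n) : ∃ p : Fin n → Fin n, p t.root = t.root ∧
    (∀ v, Desc p t.root v) ∧ ∀ u v, t.adj.Adj u v ↔ u ≠ v ∧ (p u = v ∨ p v = u) := by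
  have ht : t.adj.IsTree := ⟨t.connected, t.acyclic⟩
  choose P hP hu using fun v => ht.existsUnique_path v t.root
  have huniq : ∀ v (q : t.adj.Walk v t.root), q.IsPath → q = P v := fun v q hq => hu v q hq
  have hdesc : ∀ v (q : t.adj.Walk v t.root), q.IsPath →
      Desc (fun v => (P v).snd) t.root v := by
    have key : ∀ v r (q : t.adj.Walk v r), q.IsPath → r = t.root →
        Desc (fun v => (P v).snd) t.root v := by
      intro v r q
      induction q with
      | nil => rintro _ rfl; exact Desc.self
      | @cons a b c h q ih =>
        rintro hq rfl
        refine Desc.step _ ?_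
        have h1 := huniq _ _ hq
        have h2 : (P a).snd = b := by rw [← h1]; simp
        simp only [h2]
        exact ih hq.of_cons rfl
    exact fun v q hq => key v _ q hq rfl
  refine ⟨fun v => (P v).snd, ?_, fun v => hdesc v (P v) (hP v), ?_⟩
  · have := huniq t.root Walk.nil Walk.IsPath.nil
    simp only
    rw [← this]; simp
  · intro u v
    have hback : ∀ u v, u ≠ v → (P u).snd = v → t.adj.Adj u v := by
      intro u v huv h
      by_cases hn : (P u).Nil
      · have : (P u).snd = u := by
          have hr : u = t.root := hn.eq
          subst hr
          rw [← huniq t.root Walk.nil Walk.IsPath.nil]; simp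
        exact (huv (this.symm.trans h)).elim
      · rw [← h]; exact Walk.adj_snd hn
    constructor
    · intro h
      refine ⟨h.ne, ?_⟩
      by_cases hs : v ∈ (P u).support
      · left
        exact (t.acyclic.eq_snd_of_adj_start (hP u) h hs).symm
      · right
        have h1 := huniq v (Walk.cons h.symm (P u)) ((Walk.cons_isPath_iff _ _).2 ⟨hP u, hs⟩)
        simp only
        rw [← h1]; simp
    · rintro ⟨huv, h | h⟩
      · exact hback u v huv h
      · exact (hback v u huv.symm h).symm

noncomputable def RTree.par {n : ℕ} (t : RTree n) : Fin n → Fin n := t.exists_parent.choose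

noncomputable def RTree.toPF {n : ℕ} (t : RTree n) : PF where
  V := Fin n
  fin := inferInstance
  p := t.par
  r := t.root
  hr := t.exists_parent.choose_spec.1
  hp := t.exists_parent.choose_spec.2.1

theorem RTree.adj_iff {n : ℕ} (t : RTree n) (u v : Fin n) :
    t.adj.Adj u v ↔ u ≠ v ∧ (t.par u = v ∨ t.par v = u) :=
  t.exists_parent.choose_spec.2.2 u v

/-- uniqueness of the parent function -/
theorem PF.par_unique {V : Type} (r : V) (p q : V → V) (hp0 : p r = r) (hq0 : q r = r)
    (hp : ∀ v, Desc p r v) (hq : ∀ v, Desc q r v)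
    (h : ∀ u v, u ≠ v → (p u = v ∨ p v = u) → (q u = v ∨ q v = u)) [Finite V] : p = q := by
  let A : PF := ⟨V, inferInstance, p, r, hp0, hp⟩
  funext u
  have := hp u
  induction this with
  | self => rw [hp0, hq0]
  | step u hu ih =>
    by_cases hur : u = r
    · rw [hur, hp0, hq0]
    · have hne : u ≠ p u := fun h' => hur (A.fix_eq h'.symm)
      rcases h u (p u) hne (Or.inl rfl) with h1 | h1
      · exact h1.symm
      · rw [← ih] at h1
        exact (hur (A.no_two (v := u) h1)).elim

theorem RTree.iso_iff {n : ℕ} (s t : RTree n) : (treeSetoid n).r s t ↔ PF.Iso s.toPF t.toPF := by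
  constructor
  · rintro ⟨e, he⟩
    refine ⟨e.toEquiv, ?_⟩
    -- transport `t.par` along `e`
    have hdesc : ∀ w, Desc t.par t.root w →
        Desc (fun v => e.symm (t.par (e v))) s.root (e.symm w) := by
      intro w hw
      induction hw with
      | self => rw [← he, e.symm_apply_apply]; exact Desc.self
      | step w hw ih =>
        refine Desc.step _ ?_
        simpa using ih
    have key := PF.par_unique s.root s.par (fun v => e.symm (t.par (e v))) s.toPF.hr
      (by simp only [he]; rw [show t.par t.root = t.root from t.toPF.hr, ← he, e.symm_apply_apply])
      s.toPF.hp
      (fun v => by simpa using hdesc (e v) (t.toPF.hp _))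
      (by
        intro u v huv h
        have h1 := (s.adj_iff u v).2 ⟨huv, h⟩
        have h2 := ((t.adj_iff _ _).1 (e.map_adj_iff.2 h1)).2
        rcases h2 with h2 | h2
        · left; simp [h2]
        · right; simp [h2])
    intro v
    change e (s.par v) = t.par (e v)
    rw [key]; simp
  · rintro ⟨e, he⟩
    have hroot := PF.iso_root e he
    change Fin n ≃ Fin n at e
    change ∀ v, e (s.par v) = t.par (e v) at he
    refine ⟨⟨e, ?_⟩, hroot⟩
    intro u v
    rw [t.adj_iff, s.adj_iff, ← he, ← he, e.injective.eq_iff, e.injective.eq_iff, Ne, Ne,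
      e.injective.eq_iff]

theorem RTree.leaves_toPF {n : ℕ} (t : RTree n) : t.toPF.leaves = numLeaves t := by
  unfold PF.leaves numLeaves
  refine Nat.card_congr (Equiv.subtypeEquiv (Equiv.refl _) fun v => ?_)
  change Fin n at v
  change (∀ u, t.par u = v → u = v) ↔ IsLeafV t v
  have hroot : t.par t.root = t.root := t.toPF.hr
  constructor
  · intro h
    by_cases hv : v = t.root
    · left
      subst hv
      have hall : ∀ w : Fin n, w = t.root := by
        intro w
        have := t.toPF.hp w
        change Desc t.par t.root w at this
        induction this with
        | self => rfl
        | step w hw ih => exact h w ih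
      have : Subsingleton (Fin n) := ⟨fun a b => by rw [hall a, hall b]⟩
      have h1 : n ≤ 1 := Fin.subsingleton_iff_le_one.1 this
      have h2 := t.root.pos
      omega
    · right
      refine ⟨?_, hv⟩
      rw [Set.ncard_eq_one]
      refine ⟨t.par v, ?_⟩
      ext w
      rw [mem_neighborSet, t.adj_iff, Set.mem_singleton_iff]
      constructor
      · rintro ⟨h1, h2 | h2⟩
        · exact h2.symm
        · exact (h1 (h w h2).symm).elim
      · rintro rfl
        exact ⟨fun h' => hv (t.toPF.fix_eq h'.symm), Or.inl rfl⟩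
  · rintro (h | ⟨h1, hv⟩) u hu
    · subst h; exact Subsingleton.elim _ _
    · by_contra huv
      obtain ⟨w, hw⟩ := Set.ncard_eq_one.1 h1
      have h2 : t.par v ∈ t.adj.neighborSet v := by
        rw [mem_neighborSet, t.adj_iff]
        exact ⟨fun h' => hv (t.toPF.fix_eq h'.symm), Or.inl rfl⟩
      have h3 : u ∈ t.adj.neighborSet v := by
        rw [mem_neighborSet, t.adj_iff]
        exact ⟨fun h' => huv h'.symm, Or.inr hu⟩
      rw [hw, Set.mem_singleton_iff] at h2 h3
      have h4 : t.par v = u := h2.trans h3.symm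
      exact hv (t.toPF.no_two (v := v) (by change t.par (t.par v) = v; rw [h4, hu]))

/-- the graph of a parent function -/
def PF.graph (A : PF) : SimpleGraph A.V where
  Adj u v := u ≠ v ∧ (A.p u = v ∨ A.p v = u)
  symm := ⟨fun _ _ h => ⟨h.1.symm, h.2.symm⟩⟩
  loopless := ⟨fun _ h => h.1 rfl⟩

theorem PF.graph_isTree (A : PF) : A.graph.IsTree := by
  have hconn : A.graph.Connected := by
    have key : ∀ v, A.graph.Reachable v A.r := by
      intro v
      have := A.hp v
      induction this with
      | self => exact Reachable.refl _
      | step v h ih =>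
        by_cases hv : v = A.p v
        · rw [hv]; exact ih
        · have : A.graph.Adj v (A.p v) := ⟨hv, Or.inl rfl⟩
          exact this.reachable.trans ih
    have : Nonempty A.V := ⟨A.r⟩
    exact ⟨fun u v => (key u).trans (key v).symm⟩
  rw [isTree_iff_connected_and_card]
  refine ⟨hconn, le_antisymm ?_ hconn.card_vert_le_card_edgeSet_add_one⟩
  have hsub : A.graph.edgeSet ⊆ (fun v => s(v, A.p v)) '' ({A.r}ᶜ : Set A.V) := by
    intro e
    induction e using Sym2.ind with
    | _ u v =>
      rintro ⟨huv, h | h⟩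
      · refine ⟨u, ?_, by simp [h]⟩
        rintro rfl; exact huv (A.hr.symm.trans h)
      · refine ⟨v, ?_, by simp [h, Sym2.eq_swap]⟩
        rintro rfl; exact huv (h.symm.trans A.hr)
  have h1 : A.graph.edgeSet.ncard ≤ ({A.r}ᶜ : Set A.V).ncard :=
    (Set.ncard_le_ncard hsub (Set.toFinite _)).trans (Set.ncard_image_le (Set.toFinite _))
  have h2 := Set.ncard_add_ncard_compl ({A.r} : Set A.V)
  rw [Set.ncard_singleton] at h2
  rw [Nat.card_coe_set_eq]
  omega

theorem RTree.toPF_surj {n : ℕ} (A : PF) (hA : A.size = n) : ∃ t : RTree n, PF.Iso t.toPF A := by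
  have e : A.V ≃ Fin n := Finite.equivFinOfCardEq hA
  let B : PF := ⟨Fin n, inferInstance, fun v => e (A.p (e.symm v)), e A.r, by simp [A.hr], by
    have : ∀ v, Desc A.p A.r v → Desc (fun v => e (A.p (e.symm v))) (e A.r) (e v) := by
      intro v hv
      induction hv with
      | self => exact Desc.self
      | step v h ih => exact Desc.step _ (by simpa using ih)
    intro v
    simpa using this (e.symm v) (A.hp _)⟩
  let t : RTree n := ⟨B.graph, B.graph_isTree.1, B.graph_isTree.2, e A.r⟩
  have key : B.p = t.par := PF.par_unique (e A.r) B.p t.par B.hr t.toPF.hr B.hp t.toPF.hp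
    fun u v huv h => ((t.adj_iff u v).1 (show B.graph.Adj u v from ⟨huv, h⟩)).2
  refine ⟨t, e.symm, fun v => ?_⟩
  change e.symm (t.par v) = A.p (e.symm v)
  rw [← key]
  simp [B]

def Fib (p : ℕ × ℕ) : Type 1 := {t : TT // (t.size, t.leaves) = p}

theorem fib_equiv (n k : ℕ) : Nonempty (Quotient (Setoid.comap
    (Subtype.val : {t : RTree n // numLeaves t = k} → RTree n)
    (treeSetoid n)) ≃ Fib (n, k)) := by
  have hsize : ∀ t : RTree n, t.toPF.size = n := fun t => Nat.card_fin n
  let F : Quotient (Setoid.comap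
    (Subtype.val : {t : RTree n // numLeaves t = k} → RTree n)
    (treeSetoid n)) → Fib (n, k) := Quotient.lift
      (fun t => ⟨⟦t.1.toPF⟧, by
        change (PF.size _, PF.leaves _) = _
        rw [hsize, t.1.leaves_toPF, t.2]⟩)
      (fun s t h => Subtype.ext (Quotient.sound ((RTree.iso_iff s.1 t.1).1 h)))
  refine ⟨Equiv.ofBijective F ⟨?_, ?_⟩⟩
  · intro a b
    induction a using Quotient.inductionOn with
    | h s =>
    induction b using Quotient.inductionOn with
    | h t =>
    intro h
    have h1 : (⟦s.1.toPF⟧ : TT) = ⟦t.1.toPF⟧ := congrArg Subtype.val h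
    exact Quotient.sound (show (treeSetoid n).r s.1 t.1 from
      (RTree.iso_iff s.1 t.1).2 (Quotient.exact h1))
  · rintro ⟨t, ht⟩
    induction t using Quotient.inductionOn with
    | h A =>
    have h1 : A.size = n := congrArg Prod.fst ht
    have h2 : A.leaves = k := congrArg Prod.snd ht
    obtain ⟨s, hs⟩ := RTree.toPF_surj A h1
    refine ⟨Quotient.mk _ ⟨s, ?_⟩, ?_⟩
    · rw [← s.leaves_toPF, PF.leaves_congr hs, h2]
    · exact Subtype.ext (Quotient.sound hs)

instance (n : ℕ) : Finite (RTree n) := by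
  refine Finite.of_injective (fun t : RTree n => (t.adj, t.root)) ?_
  rintro ⟨a, _, _, r⟩ ⟨b, _, _, s⟩ h
  simp only [Prod.mk.injEq] at h
  obtain ⟨rfl, rfl⟩ := h
  rfl

instance (p : ℕ × ℕ) : Finite (Fib p) := Finite.of_equiv _ (fib_equiv p.1 p.2).some

theorem card_fib (n k : ℕ) : Nat.card (Fib (n, k)) = aCount n k :=
  (Nat.card_congr (fib_equiv n k).some).symm

open Filter Topology in
theorem hasProd_multiset {α : Type*} (w : α → ℝ) (hw : ∀ a, 0 ≤ w a)
    (hs : Summable fun m : Multiset α => (m.map w).prod) :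
    HasProd (fun a => 1 - w a) (∑' m : Multiset α, (m.map w).prod)⁻¹ ∧
      (∑' m : Multiset α, (m.map w).prod) ≠ 0 := by
  classical
  set W : Multiset α → ℝ := fun m => (m.map w).prod with hW
  have hW0 : ∀ m, 0 ≤ W m := by
    intro m
    apply Multiset.prod_nonneg
    intro a ha
    obtain ⟨b, _, rfl⟩ := Multiset.mem_map.1 ha
    exact hw b
  -- sums over multisets avoiding `s`
  let I : Finset α → Multiset α → ℝ := fun s => Set.indicator {m | ∀ a ∈ m, a ∉ s} W
  have hI : ∀ s, Summable (I s) := fun s => hs.indicator _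
  have hstep : ∀ (s : Finset α) (a : α), a ∉ s →
      ∑' m, I (insert a s) m = (1 - w a) * ∑' m, I s m := by
    intro s a ha
    have hinj : Function.Injective (fun m : Multiset α => a ::ₘ m) :=
      fun m m' h => (Multiset.cons_inj_right a).1 h
    have h1 : ∀ m, I s m = I (insert a s) m + (I s m - I (insert a s) m) := fun m => by ring
    have h2 : ∑' m, (I s m - I (insert a s) m) = w a * ∑' m, I s m := by
      rw [← tsum_mul_left, ← hinj.tsum_eq (f := fun m => I s m - I (insert a s) m)]
      · refine tsum_congr fun m => ?_
        have h3 : I (insert a s) (a ::ₘ m) = 0 := by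
          apply Set.indicator_of_notMem
          simp
        simp only [h3, sub_zero]
        by_cases hm : ∀ b ∈ m, b ∉ s
        · simp only [I]
          rw [Set.indicator_of_mem, Set.indicator_of_mem]
          · simp [hW]
          · exact hm
          · simp only [Set.mem_ofPred_eq, Multiset.mem_cons, forall_eq_or_imp]
            exact ⟨ha, hm⟩
        · simp only [I]
          rw [Set.indicator_of_notMem, Set.indicator_of_notMem, mul_zero]
          · exact hm
          · simp only [Set.mem_ofPred_eq, Multiset.mem_cons, forall_eq_or_imp]
            exact fun h => hm h.2
      · intro m hm
        by_contra hr
        have ham : a ∉ m := by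
          intro h
          exact hr ⟨m.erase a, Multiset.cons_erase h⟩
        apply hm
        simp only [I]
        rw [sub_eq_zero]
        by_cases hms : ∀ b ∈ m, b ∉ s
        · rw [Set.indicator_of_mem, Set.indicator_of_mem]
          · intro b hb
            rw [Finset.mem_insert, not_or]
            exact ⟨fun h => ham (h ▸ hb), hms b hb⟩
          · exact hms
        · rw [Set.indicator_of_notMem, Set.indicator_of_notMem]
          · exact fun h => hms fun b hb hbs => h b hb (Finset.mem_insert_of_mem hbs)
          · exact hms
    rw [(hI s).tsum_sub (hI _)] at h2
    linarith
  have hprod : ∀ s : Finset α, ∑' m, I s m = (∏ a ∈ s, (1 - w a)) * ∑' m, W m := by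
    intro s
    induction s using Finset.induction_on with
    | empty => simp [I]
    | insert a s ha ih => rw [hstep s a ha, ih, Finset.prod_insert ha, mul_assoc]
  have hlim : Tendsto (fun s : Finset α => ∑' m, I s m) atTop (𝓝 1) := by
    have h1 : ∑' m : Multiset α, (if m = 0 then (1 : ℝ) else 0) = 1 := tsum_ite_eq _ _
    rw [← h1]
    refine tendsto_tsum_of_dominated_convergence (bound := W) hs ?_ ?_
    · intro m
      by_cases hm : m = 0
      · subst hm
        refine tendsto_const_nhds.congr fun s => ?_
        simp [I, hW]
      · obtain ⟨a, ha⟩ := Multiset.exists_mem_of_ne_zero hm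
        simp only [hm, if_false]
        refine tendsto_const_nhds.congr' ?_
        filter_upwards [eventually_ge_atTop ({a} : Finset α)] with s hsa
        symm
        apply Set.indicator_of_notMem
        exact fun h => h a ha (hsa (Finset.mem_singleton_self a))
    · refine Eventually.of_forall fun s m => ?_
      simp only [I]
      rw [Real.norm_of_nonneg (Set.indicator_nonneg (fun m _ => hW0 m) m)]
      exact Set.indicator_le_self' (fun m _ => hW0 m) m
  have hne : (∑' m, W m) ≠ 0 := by
    have h0 : W 0 ≤ ∑' m, W m := hs.le_tsum 0 fun m _ => hW0 m
    have : W 0 = 1 := by simp [hW]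
    linarith
  refine ⟨?_, hne⟩
  have h2 := hlim.mul_const (∑' m, W m)⁻¹
  rw [one_mul] at h2
  unfold HasProd
  simp only [SummationFilter.unconditional_filter]
  refine h2.congr fun s => ?_
  rw [hprod, mul_assoc, mul_inv_cancel₀ hne, mul_one]

noncomputable def TT.wt (x z : ℝ) (t : TT) : ℝ := x ^ t.size * z ^ t.leaves

theorem wt_prod (x z : ℝ) (m : Multiset TT) :
    (m.map (TT.wt x z)).prod = x ^ (m.map TT.size).sum * z ^ (m.map TT.leaves).sum := by
  induction m using Multiset.induction_on with
  | empty => simp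
  | cons a m ih => simp [ih, TT.wt, pow_add]; ring

noncomputable def fibEquiv : (Σ p : ℕ × ℕ, Fib p) ≃ TT :=
  Equiv.sigmaFiberEquiv fun t : TT => (t.size, t.leaves)

theorem wt_fib (x z : ℝ) (p : ℕ × ℕ) (c : Fib p) :
    TT.wt x z (fibEquiv ⟨p, c⟩) = x ^ p.1 * z ^ p.2 := by
  obtain ⟨t, rfl⟩ := c
  rfl

theorem hasSum_wt {x z : ℝ} (hx : 0 < x) (hz : 0 < z)
    (h : Summable (fun p : ℕ × ℕ => (aCount p.1 p.2 : ℝ) * x ^ p.1 * z ^ p.2)) :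
    HasSum (TT.wt x z) (Treal x z) := by
  have h1 : ∀ p : ℕ × ℕ, HasSum (fun c : Fib p => TT.wt x z (fibEquiv ⟨p, c⟩))
      ((aCount p.1 p.2 : ℝ) * x ^ p.1 * z ^ p.2) := by
    intro p
    let _ := Fintype.ofFinite (Fib p)
    have := hasSum_fintype (fun c : Fib p => TT.wt x z (fibEquiv ⟨p, c⟩))
    simp only [wt_fib, Finset.sum_const, Finset.card_univ, nsmul_eq_mul] at this ⊢
    rw [Fintype.card_eq_nat_card, show p = (p.1, p.2) from rfl, card_fib] at this
    rw [mul_assoc]; exact this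
  rw [← fibEquiv.hasSum_iff]
  refine HasSum.sigma_of_hasSum h.hasSum h1 ?_
  rw [summable_sigma_of_nonneg]
  · refine ⟨fun p => (h1 p).summable, ?_⟩
    exact h.congr fun p => (h1 p).tsum_eq.symm
  · intro c
    exact (mul_pos (pow_pos hx _) (pow_pos hz _)).le

theorem hasSum_multiset_wt {x z : ℝ} (hx : 0 < x) (hz : 0 < z)
    (h : Summable (fun p : ℕ × ℕ => (aCount p.1 p.2 : ℝ) * x ^ p.1 * z ^ p.2)) :
    HasSum (fun m : Multiset TT => (m.map (TT.wt x z)).prod) ((Treal x z - z * x + x) / x) := by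
  classical
  rw [← TT.DE.hasSum_iff]
  have h1 := (hasSum_wt hx hz h).add (hasSum_ite_eq (TT.DE.symm 0) (x - z * x))
  have h2 := h1.div_const x
  rw [show Treal x z + (x - z * x) = Treal x z - z * x + x by ring] at h2
  refine (congrArg (fun F : TT → ℝ => HasSum F ((Treal x z - z * x + x) / x))
    (funext fun t => ?_)).mpr h2
  rw [eq_div_iff hx.ne']
  simp only [Function.comp, TT.wt]
  change ((t.D).map (fun t : TT => TT.wt x z t)).prod * x = _
  rw [wt_prod, t.size_eq]
  by_cases ht : t = TT.DE.symm 0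
  · have h0 : t.D = 0 := (Equiv.eq_symm_apply TT.DE).1 ht
    rw [t.leaves_eq_zero h0, if_pos ht, h0]
    simp; ring
  · have h0 : t.D ≠ 0 := fun h0 => ht ((Equiv.eq_symm_apply TT.DE).2 h0)
    rw [if_neg ht, t.leaves_eq h0]
    ring

theorem aCount_eq_zero (n k : ℕ) (h : n = 0 ∨ k = 0) : aCount n k = 0 := by
  rw [← card_fib]
  have : IsEmpty (Fib (n, k)) := by
    refine ⟨fun c => ?_⟩
    obtain ⟨t, ht⟩ := c
    have h1 : t.size = n := congrArg Prod.fst ht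
    have h2 : t.leaves = k := congrArg Prod.snd ht
    have := t.size_pos
    have := t.leaves_pos
    omega
  exact Nat.card_of_isEmpty

theorem shift_aux (F : ℕ × ℕ → ℝ) (P : ℝ) (hF : ∀ n k, n = 0 ∨ k = 0 → F (n, k) = 1)
    (h : HasProd F P) : HasProd (fun p : ℕ × ℕ => F (p.1 + 1, p.2 + 1)) P := by
  have hinj : Function.Injective (fun p : ℕ × ℕ => (p.1 + 1, p.2 + 1)) := by
    rintro ⟨a, b⟩ ⟨c, d⟩ h
    simpa using h
  refine (hinj.hasProd_iff (f := F) ?_).2 h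
  rintro ⟨n, k⟩ hr
  apply hF
  by_contra hnk
  rw [not_or] at hnk
  refine hr ⟨(n - 1, k - 1), Prod.ext ?_ ?_⟩
  · exact Nat.succ_pred hnk.1
  · exact Nat.succ_pred hnk.2

theorem cayley_aux (z x : ℝ) (hz : 0 < z) (hx0 : 0 < x) (hxr : x < rFun z) :
    ∃ S : ℝ, S ≠ 0 ∧ S = (Treal x z - z * x + x) / x ∧ HasProd (fun p : ℕ × ℕ =>
      (1 - x ^ (p.1 + 1) * z ^ (p.2 + 1)) ^ aCount (p.1 + 1) (p.2 + 1)) S⁻¹ := by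
  have hsum : Summable (fun p : ℕ × ℕ => (aCount p.1 p.2 : ℝ) * x ^ p.1 * z ^ p.2) := by
    unfold rFun at hxr
    have hne : {x : ℝ | 0 < x ∧
        Summable (fun p : ℕ × ℕ => (aCount p.1 p.2 : ℝ) * x ^ p.1 * z ^ p.2)}.Nonempty := by
      by_contra hne
      rw [Set.not_nonempty_iff_eq_empty] at hne
      rw [hne, Real.sSup_empty] at hxr
      linarith
    obtain ⟨y, ⟨hy0, hy⟩, hxy⟩ := exists_lt_of_lt_csSup hne hxr
    refine Summable.of_nonneg_of_le (fun p => by positivity) (fun p => ?_) hy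
    gcongr
  have hM := hasSum_multiset_wt hx0 hz hsum
  obtain ⟨hP, hne⟩ := hasProd_multiset (TT.wt x z)
    (fun t => (mul_pos (pow_pos hx0 _) (pow_pos hz _)).le) hM.summable
  rw [hM.tsum_eq] at hP hne
  refine ⟨_, hne, rfl, ?_⟩
  rw [← fibEquiv.hasProd_iff] at hP
  have h2 : HasProd (fun p : ℕ × ℕ => (1 - x ^ p.1 * z ^ p.2) ^ aCount p.1 p.2)
      ((Treal x z - z * x + x) / x)⁻¹ := by
    refine hP.sigma fun p => ?_
    let _ := Fintype.ofFinite (Fib p)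
    have := hasProd_fintype (fun c : Fib p => 1 - TT.wt x z (fibEquiv ⟨p, c⟩))
    simp only [Function.comp]
    simp only [wt_fib, Finset.prod_const, Finset.card_univ] at this ⊢
    rw [Fintype.card_eq_nat_card, show p = (p.1, p.2) from rfl, card_fib] at this
    exact this
  exact shift_aux (fun p : ℕ × ℕ => (1 - x ^ p.1 * z ^ p.2) ^ aCount p.1 p.2) _
    (fun n k hnk => by simp only [aCount_eq_zero n k hnk, pow_zero]) h2

/-- The bivariate analogue of the Cayley product formula:
`T(x,z) − zx + x = x / Π_{n,m ≥ 1} (1 − x^n z^m)^{a_{n,m}}`, the infinite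
product converging to a nonzero limit, for `0 < x < r(z)`, `z > 0`. -/
theorem cayley_product_formula (z x : ℝ) (hz : 0 < z) (hx0 : 0 < x)
    (hxr : x < rFun z) :
    Multipliable (fun p : ℕ × ℕ =>
      (1 - x ^ (p.1 + 1) * z ^ (p.2 + 1)) ^ aCount (p.1 + 1) (p.2 + 1)) ∧
    (∏' p : ℕ × ℕ,
      (1 - x ^ (p.1 + 1) * z ^ (p.2 + 1)) ^ aCount (p.1 + 1) (p.2 + 1)) ≠ 0 ∧
    Treal x z - z * x + x =
      x / ∏' p : ℕ × ℕ,
        (1 - x ^ (p.1 + 1) * z ^ (p.2 + 1)) ^ aCount (p.1 + 1) (p.2 + 1) := by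
  obtain ⟨S, hS, hSe, hP⟩ := cayley_aux z x hz hx0 hxr
  refine ⟨hP.multipliable, ?_, ?_⟩
  · rw [hP.tprod_eq]; exact inv_ne_zero hS
  · rw [hP.tprod_eq, div_inv_eq_mul, hSe, mul_div_cancel₀ _ hx0.ne']
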